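/- arXiv:2107.05022 — 2 statements merged into one kernel-verified Lean document; each statement's English description precedes it below -/
import Mathlib

section
/- Let (X,d,μ) be a complete metric measure space with a doubling measure μ, Ω ⊂ X open, and w a weight on Ω satisfying the Fujii–Wilson condition: ∫_B M(w χ_B) dμ ≤ C w(2B) for every ball B with 2B ⋐ Ω. Then for every η̃ > 0 there exists ε̃ > 0 such that for every ball B with 4B ⋐ Ω and every measurable set F ⊂ B, μ(F) ≤ ε̃ μ(B) implies w(F) ≤ η̃ w(4B). -/
open MeasureTheory Metric Set
open scoped ENNReal

/-- The (uncentered) Hardy–Littlewood maximal function of `f`: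
`Mf(x) = sup { ⨍_B |f| dμ : B a ball containing x }`. -/
noncomputable def HLMax {X : Type*} [PseudoMetricSpace X] [MeasurableSpace X]
    (μ : Measure X) (f : X → ℝ) (x : X) : ℝ≥0∞ :=
  ⨆ (z : X) (r : ℝ) (_ : x ∈ ball z r),
    (μ (ball z r))⁻¹ * ∫⁻ y in ball z r, ENNReal.ofReal |f y| ∂μ

open Filter Topology in
lemma fw_secondCountable {X : Type*} [MetricSpace X] [MeasurableSpace X] [BorelSpace X]
    (μ : Measure X) [SigmaFinite μ]
    (hpos : ∀ (x : X) (r : ℝ), 0 < r → 0 < μ (ball x r)) : SecondCountableTopology X := by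
  refine Metric.secondCountable_of_almost_dense_set fun ε hε => ?_
  obtain ⟨u, -, hd, hu⟩ := Vitali.exists_disjoint_subfamily_covering_enlargement_closedBall
    (univ : Set X) (fun x => x) (fun _ => ε / 5) (ε / 5) (fun _ _ => le_rfl) 5 (by norm_num)
  refine ⟨u, ?_, ?_⟩
  · have hc := Measure.countable_meas_pos_of_disjoint_iUnion (μ := μ)
      (As := fun a : u => closedBall (a : X) (ε / 5)) (fun _ => measurableSet_closedBall)
      (fun a b hab => hd a.2 b.2 (fun h => hab (Subtype.ext h)))
    have : {i : u | 0 < μ (closedBall (i : X) (ε / 5))} = univ :=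
      eq_univ_of_forall fun a =>
        (hpos a (ε / 5) (by positivity)).trans_le (measure_mono ball_subset_closedBall)
    rw [this] at hc
    exact countable_coe_iff.1 (countable_univ_iff.1 hc)
  · intro a
    obtain ⟨b, hb, hab⟩ := hu a (mem_univ _)
    refine ⟨b, hb, ?_⟩
    have := hab (mem_closedBall_self (by positivity))
    rw [mem_closedBall] at this
    linarith

lemma fw_isOpen {X : Type*} [MetricSpace X] [MeasurableSpace X]
    (μ : Measure X) (f : X → ℝ) (l : ℝ≥0∞) : IsOpen {y | l < HLMax μ f y} := by
  rw [Metric.isOpen_iff]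
  intro y hy
  simp only [mem_ofPred_eq, HLMax, lt_iSup_iff] at hy
  obtain ⟨z, s, hys, h⟩ := hy
  obtain ⟨e, he, hb⟩ := Metric.isOpen_iff.1 (isOpen_ball (x := z) (ε := s)) y hys
  refine ⟨e, he, fun q hq => ?_⟩
  simp only [mem_ofPred_eq, HLMax, lt_iSup_iff]
  exact ⟨z, s, hb hq, h⟩

open Filter Topology in
lemma fw_reverse {X : Type*} [MetricSpace X] [MeasurableSpace X] [BorelSpace X]
    [SecondCountableTopology X]
    (μ : Measure X) [IsLocallyFiniteMeasure μ] [IsUnifLocDoublingMeasure μ] [SigmaFinite μ]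
    (D : ℝ≥0∞) (hD : D ≠ ⊤) (hD0 : D ≠ 0)
    (hdoub : ∀ (x : X) (r : ℝ), 0 < r →
      0 < μ (ball x r) ∧ μ (ball x r) < ⊤ ∧ μ (ball x (2 * r)) ≤ D * μ (ball x r))
    (f : X → ℝ) (hf : Integrable f μ) (x : X) (r : ℝ) (hr : 0 < r) (l : ℝ≥0∞)
    (hlt : l ≠ ⊤)
    (hl : D ^ 3 * ∫⁻ y, ENNReal.ofReal |f y| ∂μ ≤ l * μ (ball x r)) :
    ∫⁻ y in {y | y ∈ ball x r ∧ D * l < ENNReal.ofReal |f y|}, ENNReal.ofReal |f y| ∂μ ≤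
      D ^ 3 * (l * μ (ball x (2 * r) ∩ {y | l < HLMax μ f y})) := by
  set g : X → ℝ≥0∞ := fun y => ENNReal.ofReal |f y| with hg
  have hgm : AEMeasurable g μ := hf.1.aemeasurable.abs.ennreal_ofReal
  have hgi : ∫⁻ y, g y ∂μ ≠ ⊤ := by
    have := hf.abs.lintegral_lt_top
    exact this.ne
  have hd8 : ∀ (y : X) (s : ℝ), 0 < s → μ (ball y (8 * s)) ≤ D ^ 3 * μ (ball y s) := by
    intro y s hs
    calc μ (ball y (8 * s)) = μ (ball y (2 * (2 * (2 * s)))) := by ring_nf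
      _ ≤ D * (D * (D * μ (ball y s))) := by
        refine (hdoub y _ (by positivity)).2.2.trans ?_
        gcongr
        refine (hdoub y _ (by positivity)).2.2.trans ?_
        gcongr
        exact (hdoub y _ (by positivity)).2.2
      _ = _ := by ring
  -- stopping radii
  have hrad : ∀ y ∈ ball x r, (∃ k : ℕ, l * μ (ball y (r / 2 ^ k)) < ∫⁻ z in ball y (r / 2 ^ k), g z ∂μ) →
      ∃ s : ℝ, 0 < s ∧ s ≤ r ∧ l * μ (ball y s) < ∫⁻ z in ball y s, g z ∂μ ∧
        ∫⁻ z in ball y (8 * s), g z ∂μ ≤ l * μ (ball y (8 * s)) := by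
    classical
    intro y hy hk
    set k := Nat.find hk with hkdef
    have h1 := Nat.find_spec hk
    have h2 : ∀ j < k, _ := fun j hj => Nat.find_min hk hj
    rw [← hkdef] at h1
    have h3 : 3 ≤ k := by
      by_contra hlt3
      push Not at hlt3
      refine absurd h1 (not_lt.2 ?_)
      have hA : D ^ 3 * ∫⁻ z in ball y (r / 2 ^ k), g z ∂μ ≤ D ^ 3 * (l * μ (ball y (r / 2 ^ k))) := by
        calc D ^ 3 * ∫⁻ z in ball y (r / 2 ^ k), g z ∂μ ≤ D ^ 3 * ∫⁻ z, g z ∂μ := by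
              gcongr; exact Measure.restrict_le_self
          _ ≤ l * μ (ball x r) := hl
          _ ≤ l * μ (ball y (8 * (r / 2 ^ 2))) := by
              gcongr
              apply ball_subset_ball'
              rw [mem_ball, dist_comm] at hy
              linarith
          _ ≤ l * (D ^ 3 * μ (ball y (r / 2 ^ 2))) := by
              gcongr; exact hd8 _ _ (by positivity)
          _ ≤ l * (D ^ 3 * μ (ball y (r / 2 ^ k))) := by
              gcongr
              · norm_num
              · omega
          _ = _ := by ring
      exact (ENNReal.mul_le_mul_iff_right (pow_ne_zero _ hD0) (ENNReal.pow_ne_top hD)).1 hA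
    refine ⟨r / 2 ^ k, by positivity, ?_, h1, ?_⟩
    · exact div_le_self hr.le (one_le_pow₀ (by norm_num))
    · have h4 := not_lt.1 (h2 (k - 3) (by omega))
      have e : r / 2 ^ (k - 3) = 8 * (r / 2 ^ k) := by
        obtain ⟨j, hj⟩ := Nat.exists_eq_add_of_le h3
        rw [hj, Nat.add_sub_cancel_left, pow_add]
        field_simp
        norm_num
      rwa [e] at h4
  let S : Set X := {y | y ∈ ball x r ∧
    ∃ k : ℕ, l * μ (ball y (r / 2 ^ k)) < ∫⁻ z in ball y (r / 2 ^ k), g z ∂μ}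
  have hGS : {y | y ∈ ball x r ∧ D * l < g y} ≤ᵐ[μ] S := by
    have hL := VitaliFamily.ae_tendsto_lintegral_div
      (IsUnifLocDoublingMeasure.vitaliFamily μ 1) hgm hgi
    filter_upwards [hL] with y hy
    rintro ⟨hyb, hyl⟩
    refine ⟨hyb, ?_⟩
    have hδ : Tendsto (fun k : ℕ => r / 2 ^ (k + 1)) atTop (𝓝[>] (0:ℝ)) := by
      rw [tendsto_nhdsWithin_iff]
      refine ⟨?_, Eventually.of_forall fun k => by simp only [mem_Ioi]; positivity⟩
      have := (tendsto_pow_atTop_nhds_zero_of_lt_one (r := (1/2:ℝ)) (by norm_num) (by norm_num)).const_mul r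
      have := (tendsto_add_atTop_iff_nat 1).2 this
      simpa [div_eq_mul_inv] using this
    have ht := hy.comp (IsUnifLocDoublingMeasure.tendsto_closedBall_filterAt μ (K := 1)
      (fun _ : ℕ => y) _ hδ (Eventually.of_forall fun k => by
        apply mem_closedBall_self; positivity))
    obtain ⟨k, hk⟩ := (ht.eventually (lt_mem_nhds hyl)).exists
    refine ⟨k, ?_⟩
    simp only [Function.comp] at hk
    have hp : 0 < r / 2 ^ (k + 1) := by positivity
    have e : r / 2 ^ k = 2 * (r / 2 ^ (k + 1)) := by rw [pow_succ]; field_simp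
    have hk' := ENNReal.mul_lt_of_lt_div hk
    calc l * μ (ball y (r / 2 ^ k)) ≤ l * (D * μ (ball y (r / 2 ^ (k + 1)))) := by
          gcongr; rw [e]; exact (hdoub y _ hp).2.2
      _ ≤ l * (D * μ (closedBall y (r / 2 ^ (k + 1)))) := by
          gcongr; exact ball_subset_closedBall
      _ = D * l * μ (closedBall y (r / 2 ^ (k + 1))) := by ring
      _ < _ := hk'
      _ ≤ _ := by
          apply lintegral_mono_set
          apply closedBall_subset_ball
          rw [e]; linarith
  have hradii : ∀ y : X, ∃ s : ℝ, y ∈ S → 0 < s ∧ s ≤ r ∧ l * μ (ball y s) < ∫⁻ z in ball y s, g z ∂μ ∧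
        ∫⁻ z in ball y (8 * s), g z ∂μ ≤ l * μ (ball y (8 * s)) := by
    intro y
    by_cases hy : y ∈ S
    · obtain ⟨s, hs⟩ := hrad y hy.1 hy.2
      exact ⟨s, fun _ => hs⟩
    · exact ⟨0, fun h => absurd h hy⟩
  choose s hs using hradii
  obtain ⟨u, huS, hd, hu⟩ := Vitali.exists_disjoint_subfamily_covering_enlargement_closedBall
    S (fun x => x) s r (fun a ha => (hs a ha).2.1) 5 (by norm_num)
  have hd' : u.PairwiseDisjoint fun a => ball a (s a) :=
    hd.mono fun a => ball_subset_closedBall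
  have huc : u.Countable := hd'.countable_of_isOpen (fun _ _ => isOpen_ball)
    (fun a ha => ⟨a, mem_ball_self (hs a (huS ha)).1⟩)
  have hcov : S ⊆ ⋃ a ∈ u, ball a (8 * s a) := by
    intro y hy
    obtain ⟨b, hb, hyb⟩ := hu y hy
    simp only [mem_iUnion]
    refine ⟨b, hb, ?_⟩
    have := hyb (mem_closedBall_self (hs y hy).1.le)
    have h0 := (hs b (huS hb)).1
    exact closedBall_subset_ball (by linarith) this
  have hsub : (⋃ a ∈ u, ball a (s a)) ⊆ ball x (2 * r) ∩ {y | l < HLMax μ f y} := by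
    intro y hy
    simp only [mem_iUnion] at hy
    obtain ⟨a, ha, hya⟩ := hy
    have hsa := hs a (huS ha)
    refine ⟨?_, ?_⟩
    · have h1 := (huS ha).1
      rw [mem_ball] at h1 hya ⊢
      have := dist_triangle y a x
      linarith [hsa.2.1]
    · simp only [mem_ofPred_eq, HLMax, lt_iSup_iff]
      refine ⟨a, s a, hya, ?_⟩
      have := hdoub a (s a) hsa.1
      rw [mul_comm, ← div_eq_mul_inv,
        ENNReal.lt_div_iff_mul_lt (Or.inl this.1.ne') (Or.inl this.2.1.ne)]
      exact hsa.2.2.1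
  calc ∫⁻ y in {y | y ∈ ball x r ∧ D * l < g y}, g y ∂μ
      ≤ ∫⁻ y in ⋃ a ∈ u, ball a (8 * s a), g y ∂μ :=
        lintegral_mono_set' (hGS.trans (LE.le.eventuallyLE hcov))
    _ ≤ ∑' a : u, ∫⁻ y in ball (a : X) (8 * s a), g y ∂μ := by
        rw [biUnion_eq_iUnion]
        have := huc.to_subtype
        exact lintegral_iUnion_le _ _
    _ ≤ ∑' a : u, D ^ 3 * (l * μ (ball (a : X) (s a))) := by
        refine ENNReal.tsum_le_tsum fun a => ?_
        have hsa := hs a (huS a.2)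
        refine hsa.2.2.2.trans ?_
        calc l * μ (ball (a : X) (8 * s a)) ≤ l * (D ^ 3 * μ (ball (a : X) (s a))) := by
              gcongr; exact hd8 _ _ hsa.1
          _ = _ := by ring
    _ = D ^ 3 * (l * μ (⋃ a ∈ u, ball a (s a))) := by
        rw [ENNReal.tsum_mul_left, ENNReal.tsum_mul_left,
          measure_biUnion huc hd' (fun _ _ => measurableSet_ball)]
    _ ≤ _ := by gcongr

lemma fw_pointwise (N : ℕ) (l m : ℝ≥0∞) :
    ∑ j ∈ Finset.range N, (if 2 ^ j * l < m then 2 ^ j * l else 0) ≤ 2 * m := by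
  have key : ∀ n : ℕ, ∑ j ∈ Finset.range n, (2:ℝ≥0∞) ^ j * l ≤ 2 ^ n * l := by
    intro n
    induction n with
    | zero => simp
    | succ n ih =>
      rw [Finset.sum_range_succ, pow_succ]
      calc _ ≤ 2 ^ n * l + 2 ^ n * l := by gcongr
        _ = _ := by ring
  induction N with
  | zero => simp
  | succ n ih =>
    rw [Finset.sum_range_succ]
    split_ifs with h
    · calc _ ≤ ∑ j ∈ Finset.range n, (2:ℝ≥0∞) ^ j * l + 2 ^ n * l := by
            gcongr with j hj
            split_ifs
            · exact le_rfl
            · exact zero_le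
        _ ≤ 2 ^ n * l + 2 ^ n * l := by gcongr; exact key n
        _ = 2 * (2 ^ n * l) := by ring
        _ ≤ _ := by gcongr
    · simpa using ih

/-- If `w` satisfies the Fujii–Wilson condition, then for every `η̃ > 0` there is `ε̃ > 0`
such that for each ball `B` with `4B ⋐ Ω` and measurable `F ⊆ B`, `μ(F) ≤ ε̃ μ(B)` implies
`w(F) ≤ η̃ w(4B)`. -/
theorem fujiiWilson_implies_weak_nondoubling_4B
    {X : Type*} [MetricSpace X] [CompleteSpace X] [MeasurableSpace X] [BorelSpace X]
    (μ : Measure X) (Cd : ℝ) (hCd : 1 < Cd)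
    (hdoub : ∀ (x : X) (r : ℝ), 0 < r →
      0 < μ (ball x r) ∧ μ (ball x r) < ⊤ ∧
      μ (ball x (2 * r)) ≤ ENNReal.ofReal Cd * μ (ball x r))
    (Ω : Set X) (hΩ : IsOpen Ω) (w : X → ℝ) (hw : ∀ x, 0 ≤ w x)
    (hwloc : LocallyIntegrableOn w Ω μ)
    (C : ℝ) (hC : 0 < C)
    (hFW : ∀ (x : X) (r : ℝ), 0 < r →
      IsCompact (closure (ball x (2 * r))) → closure (ball x (2 * r)) ⊆ Ω →
      ∫⁻ y in ball x r, HLMax μ ((ball x r).indicator w) y ∂μ ≤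
        ENNReal.ofReal (C * ∫ y in ball x (2 * r), w y ∂μ)) :
    ∀ η : ℝ, 0 < η → ∃ ε : ℝ, 0 < ε ∧
      ∀ (x : X) (r : ℝ), 0 < r →
        IsCompact (closure (ball x (4 * r))) → closure (ball x (4 * r)) ⊆ Ω →
        ∀ F : Set X, MeasurableSet F → F ⊆ ball x r →
          μ F ≤ ENNReal.ofReal ε * μ (ball x r) →
          ∫ y in F, w y ∂μ ≤ η * ∫ y in ball x (4 * r), w y ∂μ := by
  obtain hX | ⟨⟨x0⟩⟩ := isEmpty_or_nonempty X
  · intro η _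
    exact ⟨1, one_pos, fun x => hX.elim x⟩
  have hsf : SigmaFinite μ := by
    refine ⟨⟨⟨fun n : ℕ => ball x0 (n + 1), fun _ => trivial, fun n => (hdoub x0 _ (by positivity)).2.1, ?_⟩⟩⟩
    refine eq_univ_of_forall fun y => ?_
    obtain ⟨n, hn⟩ := exists_nat_gt (dist y x0)
    exact mem_iUnion.2 ⟨n, by rw [mem_ball]; linarith⟩
  have hsc : SecondCountableTopology X := fw_secondCountable μ fun x r hr => (hdoub x r hr).1
  have hlf : IsLocallyFiniteMeasure μ :=
    ⟨fun x => ⟨ball x 1, ball_mem_nhds x one_pos, (hdoub x 1 one_pos).2.1⟩⟩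
  have hul : IsUnifLocDoublingMeasure μ := by
    refine ⟨⟨Real.toNNReal Cd * Real.toNNReal Cd, ?_⟩⟩
    filter_upwards [self_mem_nhdsWithin] with ε hε y
    have hε' : 0 < ε := hε
    calc μ (closedBall y (2 * ε)) ≤ μ (ball y (2 * (2 * ε))) := by
          apply measure_mono
          apply closedBall_subset_ball
          linarith
      _ ≤ ENNReal.ofReal Cd * (ENNReal.ofReal Cd * μ (ball y ε)) := by
          refine (hdoub y _ (by positivity)).2.2.trans ?_
          gcongr
          exact (hdoub y _ hε').2.2
      _ ≤ ENNReal.ofReal Cd * (ENNReal.ofReal Cd * μ (closedBall y ε)) := by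
          gcongr
          exact ball_subset_closedBall
      _ = _ := by
          rw [ENNReal.coe_mul, mul_assoc]
          rfl
  intro η hη
  have hCd0 : 0 < Cd := by linarith
  obtain ⟨n, hn⟩ := exists_nat_gt (4 * Cd ^ 3 * C / η)
  have hn0 : (0:ℝ) < n := lt_trans (by positivity) hn
  refine ⟨η / (2 * Cd ^ 4 * 2 ^ n), by positivity, ?_⟩
  intro x r hr hcomp hsubΩ F hF hFB hμF
  set W := ∫ y in ball x (4 * r), w y ∂μ with hWdef
  have hint4 : IntegrableOn w (ball x (4 * r)) μ :=
    (hwloc.integrableOn_compact_subset hsubΩ hcomp).mono_set subset_closure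
  have hF4 : F ⊆ ball x (4 * r) := hFB.trans (ball_subset_ball (by linarith))
  have hFW4 : ∫ y in F, w y ∂μ ≤ W :=
    setIntegral_mono_set hint4 (Filter.Eventually.of_forall hw) (LE.le.eventuallyLE hF4)
  have hW0 : 0 ≤ W := integral_nonneg hw
  rcases hW0.eq_or_lt with hWz | hWpos
  · rw [← hWz] at hFW4 ⊢
    simpa using hFW4
  have hB := hdoub x r hr
  set f : X → ℝ := (ball x (2 * r)).indicator w with hfdef
  have hsub24 : ball x (2 * r) ⊆ ball x (4 * r) := ball_subset_ball (by linarith)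
  have hf : Integrable f μ := (hint4.mono_set hsub24).integrable_indicator measurableSet_ball
  set D := ENNReal.ofReal Cd with hDdef
  have hD0 : D ≠ 0 := by simpa [hDdef] using hCd0
  have hDt : D ≠ ⊤ := ENNReal.ofReal_ne_top
  set g : X → ℝ≥0∞ := fun y => ENNReal.ofReal |f y| with hg
  have hgW : ∫⁻ y, g y ∂μ ≤ ENNReal.ofReal W := by
    have hf0 : ∀ y, 0 ≤ f y := fun y => indicator_nonneg (fun z _ => hw z) y
    have : ∫⁻ y, g y ∂μ = ENNReal.ofReal (∫ y, f y ∂μ) := by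
      rw [ofReal_integral_eq_lintegral_ofReal hf (Filter.Eventually.of_forall hf0)]
      simp only [hg, abs_of_nonneg (hf0 _)]
    rw [this]
    apply ENNReal.ofReal_le_ofReal
    rw [hfdef, integral_indicator measurableSet_ball]
    exact setIntegral_mono_set hint4 (Filter.Eventually.of_forall hw)
      (LE.le.eventuallyLE hsub24)
  set l0 : ℝ≥0∞ := D ^ 3 * ENNReal.ofReal W / μ (ball x r) with hl0
  have hl0m : l0 * μ (ball x r) = D ^ 3 * ENNReal.ofReal W :=
    ENNReal.div_mul_cancel hB.1.ne' hB.2.1.ne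
  have hl0t : l0 ≠ ⊤ := ENNReal.div_ne_top
    (ENNReal.mul_ne_top (ENNReal.pow_ne_top hDt) ENNReal.ofReal_ne_top) hB.1.ne'
  have hM : ∫⁻ y in ball x (2 * r), HLMax μ f y ∂μ ≤ ENNReal.ofReal (C * W) := by
    have e : 2 * (2 * r) = 4 * r := by ring
    have := hFW x (2 * r) (by positivity) (by rwa [e]) (by rwa [e])
    rwa [e] at this
  set G : Set X := {y | y ∈ ball x r ∧ D * (2 ^ n * l0) < g y} with hG
  have hGj : ∀ j ∈ Finset.range n, ∫⁻ y in G, g y ∂μ ≤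
      D ^ 3 * (2 ^ j * l0 * μ (ball x (2 * r) ∩ {y | 2 ^ j * l0 < HLMax μ f y})) := by
    intro j hj
    have hjn := (Finset.mem_range.1 hj).le
    refine le_trans ?_ (fw_reverse μ D hDt hD0 hdoub f hf x r hr (2 ^ j * l0)
      (ENNReal.mul_ne_top (by simp) hl0t) ?_)
    · apply lintegral_mono_set
      rintro y ⟨hy1, hy2⟩
      refine ⟨hy1, lt_of_le_of_lt ?_ hy2⟩
      gcongr
      norm_num
    · calc D ^ 3 * ∫⁻ y, g y ∂μ ≤ D ^ 3 * ENNReal.ofReal W := by gcongr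
        _ = 1 * l0 * μ (ball x r) := by rw [one_mul, hl0m]
        _ ≤ _ := by
          gcongr
          exact one_le_pow₀ (by norm_num)
  have hsum : (n : ℝ≥0∞) * ∫⁻ y in G, g y ∂μ ≤ D ^ 3 * (2 * ENNReal.ofReal (C * W)) := by
    calc (n : ℝ≥0∞) * ∫⁻ y in G, g y ∂μ = ∑ j ∈ Finset.range n, ∫⁻ y in G, g y ∂μ := by simp
      _ ≤ ∑ j ∈ Finset.range n,
          D ^ 3 * (2 ^ j * l0 * μ (ball x (2 * r) ∩ {y | 2 ^ j * l0 < HLMax μ f y})) :=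
          Finset.sum_le_sum hGj
      _ = D ^ 3 * ∫⁻ y in ball x (2 * r), ∑ j ∈ Finset.range n,
            {y | 2 ^ j * l0 < HLMax μ f y}.indicator (fun _ => 2 ^ j * l0) y ∂μ := by
          rw [← Finset.mul_sum, lintegral_finsetSum]
          · congr 1
            refine Finset.sum_congr rfl fun j _ => ?_
            rw [lintegral_indicator_const (fw_isOpen μ f _).measurableSet,
              Measure.restrict_apply (fw_isOpen μ f _).measurableSet, inter_comm]
          · intro j _
            exact measurable_const.indicator (fw_isOpen μ f _).measurableSet
      _ ≤ D ^ 3 * ∫⁻ y in ball x (2 * r), 2 * HLMax μ f y ∂μ := by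
          gcongr with y
          simpa only [indicator_apply, mem_ofPred_eq] using fw_pointwise n l0 (HLMax μ f y)
      _ = D ^ 3 * (2 * ∫⁻ y in ball x (2 * r), HLMax μ f y ∂μ) := by
          rw [lintegral_const_mul' _ _ (by simp)]
      _ ≤ _ := by gcongr
  have hFg : ∫⁻ y in F, g y ∂μ ≤ D * (2 ^ n * l0) * μ F + ∫⁻ y in G, g y ∂μ := by
    calc ∫⁻ y in F, g y ∂μ ≤ ∫⁻ y in F, (D * (2 ^ n * l0) + G.indicator g y) ∂μ := by
          refine setLIntegral_mono' hF fun y hy => ?_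
          by_cases h : D * (2 ^ n * l0) < g y
          · rw [indicator_of_mem (show y ∈ G from ⟨hFB hy, h⟩)]
            exact le_add_self
          · exact (not_lt.1 h).trans le_self_add
      _ = D * (2 ^ n * l0) * μ F + ∫⁻ y in F, G.indicator g y ∂μ := by
          rw [lintegral_add_left measurable_const, setLIntegral_const]
      _ ≤ D * (2 ^ n * l0) * μ F + ∫⁻ y, G.indicator g y ∂μ := by
          gcongr
          exact Measure.restrict_le_self
      _ ≤ _ := add_le_add le_rfl (lintegral_indicator_le _ _)
  have h1 : D * (2 ^ n * l0) * μ F ≤ ENNReal.ofReal (η / 2 * W) := by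
    calc D * (2 ^ n * l0) * μ F
        ≤ D * (2 ^ n * l0) * (ENNReal.ofReal (η / (2 * Cd ^ 4 * 2 ^ n)) * μ (ball x r)) := by gcongr
      _ = D * 2 ^ n * ENNReal.ofReal (η / (2 * Cd ^ 4 * 2 ^ n)) * (l0 * μ (ball x r)) := by ring
      _ = D * 2 ^ n * ENNReal.ofReal (η / (2 * Cd ^ 4 * 2 ^ n)) * (D ^ 3 * ENNReal.ofReal W) := by
          rw [hl0m]
      _ = ENNReal.ofReal (Cd * 2 ^ n * (η / (2 * Cd ^ 4 * 2 ^ n)) * (Cd ^ 3 * W)) := by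
          rw [ENNReal.ofReal_mul (by positivity), ENNReal.ofReal_mul (by positivity),
            ENNReal.ofReal_mul (by positivity), ENNReal.ofReal_mul (by positivity),
            ENNReal.ofReal_pow (by positivity), ENNReal.ofReal_pow (by positivity)]
          simp [hDdef]
      _ = ENNReal.ofReal (η / 2 * W) := by
          congr 1
          field_simp
      _ ≤ _ := le_rfl
  have h2 : ∫⁻ y in G, g y ∂μ ≤ ENNReal.ofReal (η / 2 * W) := by
    have h3 : (n : ℝ≥0∞) * ∫⁻ y in G, g y ∂μ ≤ n * ENNReal.ofReal (η / 2 * W) := by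
      refine hsum.trans ?_
      rw [hDdef, ← ENNReal.ofReal_pow hCd0.le, ← ENNReal.ofReal_natCast n,
        ← ENNReal.ofReal_mul hn0.le, show (2:ℝ≥0∞) = ENNReal.ofReal 2 by simp,
        ← ENNReal.ofReal_mul (by norm_num), ← ENNReal.ofReal_mul (by positivity)]
      apply ENNReal.ofReal_le_ofReal
      rw [div_lt_iff₀ hη] at hn
      nlinarith
    refine (ENNReal.mul_le_mul_iff_right ?_ (ENNReal.natCast_ne_top n)).1 h3
    exact_mod_cast hn0.ne'
  have hfin : ENNReal.ofReal (∫ y in F, w y ∂μ) ≤ ENNReal.ofReal (η * W) := by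
    rw [ofReal_integral_eq_lintegral_ofReal (hint4.mono_set hF4) (Filter.Eventually.of_forall hw)]
    calc ∫⁻ y in F, ENNReal.ofReal (w y) ∂μ ≤ ∫⁻ y in F, g y ∂μ := by
          refine setLIntegral_mono' hF fun y hy => ?_
          have : f y = w y := indicator_of_mem (ball_subset_ball (by linarith) (hFB hy)) w
          simp only [hg, this]
          exact ENNReal.ofReal_le_ofReal (le_abs_self _)
      _ ≤ ENNReal.ofReal (η / 2 * W) + ENNReal.ofReal (η / 2 * W) :=
          hFg.trans (add_le_add h1 h2)
      _ = ENNReal.ofReal (η * W) := by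
          rw [← ENNReal.ofReal_add (by positivity) (by positivity)]
          congr 1
          ring
  exact (ENNReal.ofReal_le_ofReal_iff (by positivity)).1 hfin
end

section
/- Let (X,d,μ) be a complete metric measure space with a doubling measure μ, Ω ⊂ X open, and w a weight on Ω satisfying: there exists C > 0 such that ∫_B |f − f_B| w dμ ≤ C w(2B) for every ball B with 11B ⋐ Ω and every f ∈ BMO(Ω) with ‖f‖_{BMO(Ω)} ≤ 1. Then for every η̃ > 0 there exists ε̃ > 0 such that for every ball B with 11B ⋐ Ω and every measurable set F ⊂ B, μ(F) ≤ ε̃ μ(B) implies w(F) ≤ η̃ w(2B). -/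
open MeasureTheory Metric Set
open scoped ENNReal

/-- super-level set of the maximal function of U -/
def Elev {X : Type*} [MetricSpace X] [MeasurableSpace X] (μ : Measure X) (U : Set X) (t : ℝ) :
    Set X :=
  {x | ∃ (y : X) (s : ℝ), 0 < s ∧ x ∈ ball y s ∧
    t * μ.real (ball y s) < μ.real (U ∩ ball y s)}

/-- doubling -/
def Doub {X : Type*} [MetricSpace X] [MeasurableSpace X] (μ : Measure X) (D : ℝ) : Prop :=
  ∀ (x : X) (r : ℝ), 0 < r →
      0 < μ (ball x r) ∧ μ (ball x r) < ⊤ ∧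
      μ (ball x (2 * r)) ≤ ENNReal.ofReal D * μ (ball x r)

section
variable {X : Type*} [MetricSpace X] [MeasurableSpace X] [BorelSpace X]
  {μ : Measure X} {D : ℝ}

lemma Doub.pos (h : Doub μ D) (x : X) {r : ℝ} (hr : 0 < r) : 0 < μ.real (ball x r) :=
  ENNReal.toReal_pos (h x r hr).1.ne' (h x r hr).2.1.ne

lemma Doub.four (h : Doub μ D) (hD : 1 < D) (x : X) {r : ℝ} (hr : 0 < r) :
    μ.real (ball x (4 * r)) ≤ D ^ 2 * μ.real (ball x r) := by
  have key : ∀ s, 0 < s → μ.real (ball x (2 * s)) ≤ D * μ.real (ball x s) := by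
    intro s hs
    have := ENNReal.toReal_mono (ENNReal.mul_ne_top ENNReal.ofReal_ne_top (h x s hs).2.1.ne)
      (h x s hs).2.2
    rwa [ENNReal.toReal_mul, ENNReal.toReal_ofReal (by linarith)] at this
  have h1 := key r hr
  have h2 := key (2 * r) (by linarith)
  have e : 2 * (2 * r) = 4 * r := by ring
  rw [e] at h2
  nlinarith

lemma Doub.fin (h : Doub μ D) (x : X) (r : ℝ) : μ (ball x r) ≠ ⊤ := by
  rcases le_or_gt r 0 with hr | hr
  · simp [ball_eq_empty.2 hr]
  · exact (h x r hr).2.1.ne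

lemma Doub.mono_ball (h : Doub μ D) {A : Set X} {x : X} {r : ℝ} {B : Set X} (hB : B ⊆ ball x r)
    (hA : A ⊆ B) : μ.real A ≤ μ.real B :=
  measureReal_mono hA (ne_top_of_le_ne_top (h.fin x r) (measure_mono hB))

lemma Elev_open (U : Set X) (t : ℝ) : IsOpen (Elev μ U t) := by
  have : Elev μ U t = ⋃ (y : X) (s : ℝ) (_ : 0 < s ∧
    t * μ.real (ball y s) < μ.real (U ∩ ball y s)), ball y s := by
    ext x; simp [Elev]; grind
  rw [this]
  exact isOpen_iUnion fun _ => isOpen_iUnion fun _ => isOpen_iUnion fun _ => isOpen_ball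

lemma Elev_mono (U : Set X) {t t' : ℝ} (h : t' ≤ t) : Elev μ U t ⊆ Elev μ U t' := by
  rintro x ⟨y, s, hs, hx, hl⟩
  exact ⟨y, s, hs, hx, lt_of_le_of_lt (by gcongr) hl⟩

lemma subset_Elev (h : Doub μ D) {U : Set X} (hU : IsOpen U) {t : ℝ} (ht : t < 1) :
    U ⊆ Elev μ U t := by
  intro x hx
  obtain ⟨s, hs, hsU⟩ := Metric.isOpen_iff.1 hU x hx
  refine ⟨x, s, hs, mem_ball_self hs, ?_⟩
  rw [inter_eq_right.2 hsU]
  have := h.pos x hs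
  nlinarith

/-- a ball with no large competitor -/
lemma weak_type (h : Doub μ D) (hD : 1 < D) {U : Set X} (hU : IsOpen U) {t : ℝ} (ht : 0 < t)
    (z : X) {R : ℝ} (hR : 0 < R)
    (hno : ∀ (y : X) (s : ℝ), R ≤ s → (ball y s ∩ ball z R).Nonempty →
      μ.real (U ∩ ball y s) ≤ t * μ.real (ball y s)) :
    t * μ.real (Elev μ U t ∩ ball z R) ≤ D ^ 2 * μ.real (U ∩ ball z (4 * R)) := by
  set T : Set (X × ℝ) := {a | 0 < a.2 ∧ (ball a.1 a.2 ∩ ball z R).Nonempty ∧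
    t * μ.real (ball a.1 a.2) < μ.real (U ∩ ball a.1 a.2)} with hT
  have hTR : ∀ a ∈ T, a.2 < R := by
    intro a ha
    by_contra hc
    push Not at hc
    exact absurd (hno a.1 a.2 hc ha.2.1) (not_le.2 ha.2.2)
  obtain ⟨u, huT, hdis, hcov⟩ := Vitali.exists_disjoint_subfamily_covering_enlargement_ball
    T (fun a => a.1) (fun a => a.2) R (fun a ha => (hTR a ha).le) 4 (by norm_num)
  have hsub : ∀ a ∈ T, ball a.1 a.2 ⊆ ball z (4 * R) := by
    rintro a ha v hv
    obtain ⟨q, hq1, hq2⟩ := ha.2.1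
    have := hTR a ha
    rw [mem_ball] at *
    have t1 := dist_triangle4 v a.1 q z
    rw [dist_comm a.1 q] at t1
    linarith
  have hdis' : Pairwise (Function.onFun Disjoint (fun a : u => ball a.1.1 a.1.2)) := by
    intro a b hab
    exact hdis a.2 b.2 (fun h => hab (Subtype.ext h))
  have hcount : u.Countable := by
    have := Measure.countable_meas_pos_of_disjoint_of_meas_iUnion_ne_top μ
      (As := fun a : u => ball a.1.1 a.1.2) (fun _ => measurableSet_ball) hdis'
      (ne_top_of_le_ne_top (h.fin z (4 * R))
        (measure_mono (iUnion_subset fun a => hsub a.1 (huT a.2))))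
    have e : {a : u | 0 < μ (ball a.1.1 a.1.2)} = univ := by
      ext a; simp only [mem_setOf_eq, mem_univ, iff_true]
      exact (h a.1.1 a.1.2 (huT a.2).1).1
    rw [e] at this
    exact Set.countable_coe_iff.1 (Set.countable_univ_iff.1 this)
  have := hcount.to_subtype
  have hE : Elev μ U t ∩ ball z R ⊆ ⋃ a : u, ball a.1.1 (4 * a.1.2) := by
    rintro x ⟨⟨y, s, hs, hx, hl⟩, hxz⟩
    obtain ⟨b, hb, hbs⟩ := hcov (y, s) ⟨hs, ⟨x, hx, hxz⟩, hl⟩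
    exact mem_iUnion.2 ⟨⟨b, hb⟩, hbs hx⟩
  have hfinU : μ (U ∩ ball z (4 * R)) ≠ ⊤ :=
    ne_top_of_le_ne_top (h.fin z (4 * R)) (measure_mono inter_subset_right)
  have key : ENNReal.ofReal t * μ (Elev μ U t ∩ ball z R) ≤
      ENNReal.ofReal (D ^ 2) * μ (U ∩ ball z (4 * R)) := by
    calc ENNReal.ofReal t * μ (Elev μ U t ∩ ball z R)
        ≤ ENNReal.ofReal t * ∑' a : u, μ (ball a.1.1 (4 * a.1.2)) := by
          gcongr
          exact (measure_mono hE).trans (measure_iUnion_le _)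
      _ = ∑' a : u, ENNReal.ofReal t * μ (ball a.1.1 (4 * a.1.2)) := ENNReal.tsum_mul_left.symm
      _ ≤ ∑' a : u, ENNReal.ofReal (D ^ 2) * μ (U ∩ ball a.1.1 a.1.2) := by
          refine ENNReal.tsum_le_tsum fun a => ?_
          have ha := huT a.2
          have h4 := h.four hD a.1.1 ha.1
          rw [← ofReal_measureReal (h.fin _ _), ← ofReal_measureReal
            (ne_top_of_le_ne_top (h.fin a.1.1 a.1.2) (measure_mono inter_subset_right)),
            ← ENNReal.ofReal_mul ht.le, ← ENNReal.ofReal_mul (by positivity)]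
          apply ENNReal.ofReal_le_ofReal
          have := ha.2.2
          calc t * μ.real (ball a.1.1 (4 * a.1.2)) ≤ t * (D ^ 2 * μ.real (ball a.1.1 a.1.2)) := by
                gcongr
            _ = D ^ 2 * (t * μ.real (ball a.1.1 a.1.2)) := by ring
            _ ≤ _ := by gcongr
      _ = ENNReal.ofReal (D ^ 2) * ∑' a : u, μ (U ∩ ball a.1.1 a.1.2) := ENNReal.tsum_mul_left
      _ ≤ _ := by
          gcongr
          refine (tsum_meas_le_meas_iUnion_of_disjoint μ
            (fun a : u => hU.measurableSet.inter measurableSet_ball) ?_).trans ?_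
          · intro a b hab
            exact (hdis' hab).mono inter_subset_right inter_subset_right
          · exact measure_mono (iUnion_subset fun a =>
              inter_subset_inter_right _ (hsub a.1 (huT a.2)))
  have := ENNReal.toReal_mono (ENNReal.mul_ne_top ENNReal.ofReal_ne_top hfinU) key
  rwa [ENNReal.toReal_mul, ENNReal.toReal_mul, ENNReal.toReal_ofReal ht.le,
    ENNReal.toReal_ofReal (by positivity)] at this

lemma large_sub {y z : X} {s R : ℝ} (hs : R ≤ s) (hne : (ball y s ∩ ball z R).Nonempty) :
    ball z R ⊆ ball y (4 * s) := by
  obtain ⟨q, h1, h2⟩ := hne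
  intro v hv
  rw [mem_ball] at *
  have t1 := dist_triangle4 v z q y
  rw [dist_comm z q] at t1
  have : 0 ≤ dist q y := dist_nonneg
  linarith

/-- key level set estimate -/
lemma level_est (h : Doub μ D) (hD : 1 < D) {p : ℕ} (hp : D ^ 4 ≤ 2 ^ p) {U : Set X}
    (hU : IsOpen U) (z : X) {R : ℝ} (hR : 0 < R) {m k : ℕ}
    (hm : ¬ ball z R ⊆ Elev μ U (1 / 2 ^ (m + 1))) :
    μ.real (Elev μ U (1 / 2 ^ (k + 1)) ∩ ball z R) ≤
      2 ^ p * 2 ^ k / 2 ^ m * μ.real (ball z R) := by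
  have hD4 : D ^ 2 ≤ D ^ 4 := pow_le_pow_right₀ hD.le (by norm_num)
  have hpos := h.pos z hR
  by_cases hno : ∀ (y : X) (s : ℝ), R ≤ s → (ball y s ∩ ball z R).Nonempty →
      μ.real (U ∩ ball y s) ≤ 1 / 2 ^ (k + 1) * μ.real (ball y s)
  · have h1 := weak_type h hD hU (t := 1 / 2 ^ (k + 1)) (by positivity) z hR hno
    have h2 : μ.real (U ∩ ball z (4 * R)) ≤ 1 / 2 ^ (m + 1) * μ.real (ball z (4 * R)) := by
      by_contra hc
      push Not at hc
      exact hm fun v hv => ⟨z, 4 * R, by linarith, ball_subset_ball (by linarith) hv, hc⟩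
    have h3 := h.four hD z hR
    have h4 : 1 / 2 ^ (k + 1) * μ.real (Elev μ U (1 / 2 ^ (k + 1)) ∩ ball z R) ≤
        1 / 2 ^ (k + 1) * (2 ^ p * 2 ^ k / 2 ^ m * μ.real (ball z R)) := by
      calc _ ≤ _ := h1
        _ ≤ D ^ 2 * (1 / 2 ^ (m + 1) * (D ^ 2 * μ.real (ball z R))) := by
            gcongr; exact h2.trans (by gcongr)
        _ = 1 / 2 ^ (m + 1) * μ.real (ball z R) * D ^ 4 := by ring
        _ ≤ 1 / 2 ^ (m + 1) * μ.real (ball z R) * 2 ^ p := by gcongr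
        _ = _ := by field_simp; ring
    exact le_of_mul_le_mul_left h4 (by positivity)
  · push Not at hno
    obtain ⟨y, s, hs, hne, hl⟩ := hno
    have hs0 : 0 < s := by linarith
    have hsub := large_sub hs hne
    have hmk : m ≤ k + p := by
      by_contra hc
      push Not at hc
      refine hm fun v hv => Elev_mono U (t := 1 / 2 ^ (k + p + 1)) ?_
        ⟨y, 4 * s, by linarith, hsub hv, ?_⟩
      · apply one_div_le_one_div_of_le (by positivity)
        exact pow_le_pow_right₀ (by norm_num) (by omega)
      · calc 1 / 2 ^ (k + p + 1) * μ.real (ball y (4 * s))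
            ≤ 1 / 2 ^ (k + p + 1) * (2 ^ p * μ.real (ball y s)) := by
              gcongr
              exact (h.four hD y hs0).trans (by gcongr; linarith)
          _ = 1 / 2 ^ (k + 1) * μ.real (ball y s) := by
              field_simp; ring
          _ < _ := hl
          _ ≤ _ := h.mono_ball (x := y) (r := 4 * s) inter_subset_right
              (inter_subset_inter_right _ (ball_subset_ball (by linarith)))
    have : (1 : ℝ) ≤ 2 ^ p * 2 ^ k / 2 ^ m := by
      rw [le_div_iff₀ (by positivity), one_mul, ← pow_add]
      exact pow_le_pow_right₀ (by norm_num) (by omega)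
    calc _ ≤ μ.real (ball z R) := h.mono_ball (x := z) (r := R) le_rfl inter_subset_right
      _ ≤ _ := by nlinarith

lemma level_sum (h : Doub μ D) (hD : 1 < D) {p : ℕ} (hp : D ^ 4 ≤ 2 ^ p) {U : Set X}
    (hU : IsOpen U) (z : X) {R : ℝ} (hR : 0 < R) {m : ℕ}
    (hm : m = 0 ∨ ¬ ball z R ⊆ Elev μ U (1 / 2 ^ m)) :
    ∑ k ∈ Finset.range m, μ.real (Elev μ U (1 / 2 ^ (k + 1)) ∩ ball z R) ≤
      2 ^ (p + 1) * μ.real (ball z R) := by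
  cases m with
  | zero => simp
  | succ m =>
    replace hm := hm.resolve_left (by omega)
    have hpos := h.pos z hR
    have geo : ∑ k ∈ Finset.range (m + 1), (2 : ℝ) ^ k ≤ 2 * 2 ^ m := by
      rw [geom_sum_eq (by norm_num)]; rw [pow_succ]; norm_num; linarith
    calc _ ≤ ∑ k ∈ Finset.range (m + 1), 2 ^ p * 2 ^ k / 2 ^ m * μ.real (ball z R) :=
          Finset.sum_le_sum fun k _ => level_est h hD hp hU z hR hm
      _ = 2 ^ p / 2 ^ m * μ.real (ball z R) * ∑ k ∈ Finset.range (m + 1), (2 : ℝ) ^ k := by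
          rw [Finset.mul_sum]; exact Finset.sum_congr rfl fun k _ => by ring
      _ ≤ 2 ^ p / 2 ^ m * μ.real (ball z R) * (2 * 2 ^ m) := by gcongr
      _ = _ := by field_simp; ring

lemma base_not (h : Doub μ D) (hD : 1 < D) {U : Set X} (hU : IsOpen U) (z : X) {R : ℝ}
    (hR : 0 < R) {N : ℕ} (hUfin : μ U ≠ ⊤)
    (hsmall : D ^ 2 * 2 ^ N * μ.real U < μ.real (ball z R)) :
    ¬ ball z R ⊆ Elev μ U (1 / 2 ^ N) := by
  intro hsub
  by_cases hno : ∀ (y : X) (s : ℝ), R ≤ s → (ball y s ∩ ball z R).Nonempty →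
      μ.real (U ∩ ball y s) ≤ 1 / 2 ^ N * μ.real (ball y s)
  · have h1 := weak_type h hD hU (t := 1 / 2 ^ N) (by positivity) z hR hno
    rw [inter_eq_right.2 hsub] at h1
    have h2 : μ.real (U ∩ ball z (4 * R)) ≤ μ.real U := measureReal_mono inter_subset_left hUfin
    have : μ.real (ball z R) ≤ 2 ^ N * (D ^ 2 * μ.real U) := by
      rw [one_div, inv_mul_le_iff₀ (by positivity)] at h1
      exact h1.trans (by gcongr)
    linarith
  · push Not at hno
    obtain ⟨y, s, hs, hne, hl⟩ := hno
    have hs0 : 0 < s := by linarith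
    have h2 : μ.real (U ∩ ball y s) ≤ μ.real U := measureReal_mono inter_subset_left hUfin
    have h3 := h.mono_ball (x := y) (r := 4 * s) le_rfl (large_sub hs hne)
    have h4 := h.four hD y hs0
    rw [one_div, inv_mul_lt_iff₀ (by positivity)] at hl
    have : D ^ 2 * μ.real (ball y s) ≤ D ^ 2 * (2 ^ N * μ.real U) := by
      gcongr; exact hl.le.trans (by gcongr)
    linarith

/-- the test function -/
noncomputable def tf (μ : Measure X) (U : Set X) (N : ℕ) (x : X) : ℝ :=
  ∑ k ∈ Finset.range N, (Elev μ U (1 / 2 ^ (k + 1))).indicator (fun _ => (1 : ℝ)) x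

lemma tf_meas (U : Set X) (N : ℕ) : Measurable (tf μ U N) := by
  unfold tf
  exact Finset.measurable_sum _ fun k _ =>
    measurable_const.indicator (Elev_open U _).measurableSet

lemma tf_nonneg (U : Set X) (N : ℕ) (x : X) : 0 ≤ tf μ U N x :=
  Finset.sum_nonneg fun k _ => indicator_nonneg (fun _ _ => zero_le_one) x

lemma tf_le (U : Set X) (N : ℕ) (x : X) : tf μ U N x ≤ N := by
  calc tf μ U N x ≤ ∑ k ∈ Finset.range N, (1 : ℝ) :=
        Finset.sum_le_sum fun k _ => indicator_le_self' (fun _ _ => zero_le_one) x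
    _ = N := by simp

lemma tf_eq (h : Doub μ D) {U : Set X} (hU : IsOpen U) (N : ℕ) {x : X} (hx : x ∈ U) :
    tf μ U N x = N := by
  have : ∀ k ∈ Finset.range N,
      (Elev μ U (1 / 2 ^ (k + 1))).indicator (fun _ => (1 : ℝ)) x = 1 := by
    intro k _
    refine indicator_of_mem (subset_Elev h hU ?_ hx) _
    rw [div_lt_one (by positivity)]
    exact one_lt_pow₀ (by norm_num) (by omega)
  rw [tf, Finset.sum_congr rfl this]; simp

lemma tf_int (U : Set X) (N : ℕ) {S : Set X} (hS : μ S ≠ ⊤) : IntegrableOn (tf μ U N) S μ := by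
  refine Measure.integrableOn_of_bounded (M := N) hS (tf_meas U N).aestronglyMeasurable ?_
  refine Filter.Eventually.of_forall fun x => ?_
  rw [Real.norm_of_nonneg (tf_nonneg U N x)]; exact tf_le U N x

lemma tf_integral (h : Doub μ D) (U : Set X) (N : ℕ) (z : X) (R : ℝ) :
    ∫ y in ball z R, tf μ U N y ∂μ =
      ∑ k ∈ Finset.range N, μ.real (Elev μ U (1 / 2 ^ (k + 1)) ∩ ball z R) := by
  unfold tf
  rw [integral_finset_sum]
  · refine Finset.sum_congr rfl fun k _ => ?_
    rw [integral_indicator (Elev_open U _).measurableSet,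
      Measure.restrict_restrict (Elev_open U _).measurableSet]
    simp
  · intro k _
    have : IsFiniteMeasure (μ.restrict (ball z R)) :=
      isFiniteMeasure_restrict.2 (h.fin z R)
    exact (integrable_const _).indicator (Elev_open U _).measurableSet

lemma tf_osc (h : Doub μ D) (hD : 1 < D) {p : ℕ} (hp : D ^ 4 ≤ 2 ^ p) {U : Set X}
    (hU : IsOpen U) (N : ℕ) (z : X) {R : ℝ} (hR : 0 < R) :
    ∃ a : ℝ, ∫ y in ball z R, |tf μ U N y - a| ∂μ ≤ 2 ^ (p + 1) * μ.real (ball z R) := by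
  classical
  obtain ⟨m, hmN, hm, hm2⟩ : ∃ m ≤ N, (m = 0 ∨ ¬ ball z R ⊆ Elev μ U (1 / 2 ^ m)) ∧
      ∀ k, m ≤ k → k < N → ball z R ⊆ Elev μ U (1 / 2 ^ (k + 1)) := by
    induction N with
    | zero => exact ⟨0, le_rfl, Or.inl rfl, by omega⟩
    | succ N ih =>
      by_cases hc : ball z R ⊆ Elev μ U (1 / 2 ^ (N + 1))
      · obtain ⟨m, h1, h2, h3⟩ := ih
        refine ⟨m, by omega, h2, fun k hk hk' => ?_⟩
        rcases Nat.lt_succ_iff_lt_or_eq.1 hk' with h4 | rfl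
        · exact h3 k hk h4
        · exact hc
      · exact ⟨N + 1, le_rfl, Or.inr hc, by omega⟩
  refine ⟨(N - m : ℕ), ?_⟩
  have : ∀ y ∈ ball z R, |tf μ U N y - (N - m : ℕ)| = tf μ U m y := by
    intro y hy
    have : tf μ U N y = tf μ U m y + (N - m : ℕ) := by
      unfold tf
      rw [← Finset.sum_range_add_sum_Ico _ hmN]
      congr 1
      rw [Finset.sum_congr rfl (g := fun _ => (1 : ℝ))]
      · simp
      · intro k hk
        rw [Finset.mem_Ico] at hk
        exact indicator_of_mem (hm2 k hk.1 hk.2 hy) _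
    rw [this, add_sub_cancel_right, abs_of_nonneg (tf_nonneg _ _ _)]
  rw [setIntegral_congr_fun measurableSet_ball this, tf_integral h]
  exact level_sum h hD hp hU z hR hm

lemma osc_avg {f : X → ℝ} {B : Set X} (hB : 0 < μ.real B)
    (hfin : μ B ≠ ⊤) (hf : IntegrableOn f B μ) (a K : ℝ)
    (ha : ∫ y in B, |f y - a| ∂μ ≤ K * μ.real B) :
    ⨍ y in B, |f y - ⨍ u in B, f u ∂μ| ∂μ ≤ 2 * K := by
  have : IsFiniteMeasure (μ.restrict B) := isFiniteMeasure_restrict.2 hfin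
  set b := ⨍ u in B, f u ∂μ with hb
  have hbe : b * μ.real B = ∫ y in B, f y ∂μ := by
    rw [hb, setAverage_eq, smul_eq_mul]; field_simp
  have h1 : |b - a| * μ.real B ≤ K * μ.real B := by
    refine le_trans (le_of_eq ?_) ((abs_integral_le_integral_abs (μ := μ.restrict B)
      (f := fun y => f y - a)).trans ha)
    rw [integral_sub hf (integrable_const _), ← hbe]
    simp only [integral_const, measureReal_restrict_apply_univ, smul_eq_mul]
    rw [mul_comm (μ.real B) a, ← sub_mul, abs_mul, abs_of_pos hB]
  have hi : Integrable (fun y => |f y - a|) (μ.restrict B) :=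
    (hf.sub (integrable_const a)).abs
  have hi2 : Integrable (fun y => |f y - b|) (μ.restrict B) :=
    (hf.sub (integrable_const b)).abs
  have h2 : ∫ y in B, |f y - b| ∂μ ≤ ∫ y in B, (|f y - a| + |b - a|) ∂μ := by
    refine integral_mono hi2 (hi.add (integrable_const _)) fun y => ?_
    have := abs_sub_le (f y) a b
    rw [abs_sub_comm a b] at this
    exact this
  rw [integral_add hi (integrable_const _)] at h2
  simp only [integral_const, measureReal_restrict_apply_univ, smul_eq_mul] at h2
  rw [setAverage_eq, smul_eq_mul, inv_mul_le_iff₀ hB]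
  linarith

end

open scoped ENNReal

/-- If `w` satisfies the BMO testing condition `∫_B |f − f_B| w dμ ≤ C w(2B)` for all balls
`B` with `11B ⋐ Ω` and all `f ∈ BMO(Ω)` with `‖f‖_{BMO(Ω)} ≤ 1`, then for every `η̃ > 0`
there is `ε̃ > 0` such that for every ball `B` with `11B ⋐ Ω` and measurable `F ⊆ B`,
`μ(F) ≤ ε̃ μ(B)` implies `w(F) ≤ η̃ w(2B)`. -/
theorem bmo_testing_implies_weak_nondoubling_11B
    {X : Type*} [MetricSpace X] [CompleteSpace X] [MeasurableSpace X] [BorelSpace X]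
    (μ : Measure X) (Cd : ℝ) (hCd : 1 < Cd)
    (hdoub : ∀ (x : X) (r : ℝ), 0 < r →
      0 < μ (ball x r) ∧ μ (ball x r) < ⊤ ∧
      μ (ball x (2 * r)) ≤ ENNReal.ofReal Cd * μ (ball x r))
    (Ω : Set X) (hΩ : IsOpen Ω) (w : X → ℝ) (hw : ∀ x, 0 ≤ w x)
    (hwloc : LocallyIntegrableOn w Ω μ)
    (C : ℝ) (hC : 0 < C)
    (hBMOtest : ∀ (x : X) (r : ℝ), 0 < r →
      IsCompact (closure (ball x (11 * r))) → closure (ball x (11 * r)) ⊆ Ω →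
      ∀ f : X → ℝ, LocallyIntegrableOn f Ω μ →
        (∀ (z : X) (R : ℝ), 0 < R → ball z R ⊆ Ω →
          ⨍ y in ball z R, |f y - ⨍ u in ball z R, f u ∂μ| ∂μ ≤ 1) →
        ∫ y in ball x r, |f y - ⨍ u in ball x r, f u ∂μ| * w y ∂μ ≤
          C * ∫ y in ball x (2 * r), w y ∂μ) :
    ∀ η : ℝ, 0 < η → ∃ ε : ℝ, 0 < ε ∧
      ∀ (x : X) (r : ℝ), 0 < r →
        IsCompact (closure (ball x (11 * r))) → closure (ball x (11 * r)) ⊆ Ω →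
        ∀ F : Set X, MeasurableSet F → F ⊆ ball x r →
          μ F ≤ ENNReal.ofReal ε * μ (ball x r) →
          ∫ y in F, w y ∂μ ≤ η * ∫ y in ball x (2 * r), w y ∂μ := by
  have h : Doub μ Cd := hdoub
  obtain ⟨p, hp⟩ : ∃ p : ℕ, Cd ^ 4 ≤ 2 ^ p := by
    obtain ⟨p, hp⟩ := pow_unbounded_of_one_lt (Cd ^ 4) (by norm_num : (1 : ℝ) < 2)
    exact ⟨p, hp.le⟩
  intro η hη
  set K : ℝ := 2 ^ (p + 1) with hK
  have hKpos : 0 < K := by positivity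
  set c : ℝ := 1 / (2 * K) with hc
  have hcpos : 0 < c := by positivity
  obtain ⟨N, hN⟩ := exists_nat_gt ((C / η + 1) / c)
  rw [div_lt_iff₀ hcpos] at hN
  have hlf : IsLocallyFiniteMeasure μ :=
    ⟨fun x => ⟨ball x 1, ball_mem_nhds x one_pos, (hdoub x 1 one_pos).2.1⟩⟩
  refine ⟨1 / (4 * Cd ^ 2 * 2 ^ N), by positivity, ?_⟩
  intro x r hr hcomp hsubΩ F hFm hFB hFs
  set ε : ℝ := 1 / (4 * Cd ^ 2 * 2 ^ N) with hε
  have hεpos : 0 < ε := by positivity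
  have hBpos := h.pos x hr
  have hBfin := h.fin x r
  -- open superset
  obtain ⟨U, hFU, hUo, hUfin, hUs⟩ : ∃ U, F ⊆ U ∧ IsOpen U ∧ μ U ≠ ⊤ ∧
      μ.real U ≤ 2 * ε * μ.real (ball x r) := by
    have : IsFiniteMeasure (μ.restrict (ball x r)) := isFiniteMeasure_restrict.2 hBfin
    have hlt : (μ.restrict (ball x r)) F < ENNReal.ofReal (2 * ε) * μ (ball x r) := by
      refine (Measure.restrict_apply_le _ _).trans_lt (hFs.trans_lt ?_)
      rw [ENNReal.mul_lt_mul_iff_left (hdoub x r hr).1.ne' hBfin]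
      exact (ENNReal.ofReal_lt_ofReal_iff (by positivity)).2 (by linarith)
    obtain ⟨V, hFV, hVo, hV⟩ := F.exists_isOpen_lt_of_lt _ hlt
    rw [Measure.restrict_apply hVo.measurableSet] at hV
    refine ⟨V ∩ ball x r, subset_inter hFV hFB, hVo.inter isOpen_ball, hV.ne_top, ?_⟩
    have := ENNReal.toReal_mono (ENNReal.mul_ne_top ENNReal.ofReal_ne_top hBfin) hV.le
    rwa [ENNReal.toReal_mul, ENNReal.toReal_ofReal (by positivity)] at this
  have hnot : ¬ ball x r ⊆ Elev μ U (1 / 2 ^ N) := by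
    refine base_not h hCd hUo x hr hUfin ?_
    calc Cd ^ 2 * 2 ^ N * μ.real U ≤ Cd ^ 2 * 2 ^ N * (2 * ε * μ.real (ball x r)) := by gcongr
      _ = μ.real (ball x r) / 2 := by rw [hε]; field_simp; norm_num
      _ < _ := by linarith
  set f : X → ℝ := fun y => c * tf μ U N y with hf
  have hfm : Measurable f := (tf_meas U N).const_mul c
  have hfint : ∀ S : Set X, μ S ≠ ⊤ → IntegrableOn f S μ := fun S hS =>
    (tf_int U N hS).const_mul c
  have hfloc : LocallyIntegrableOn f Ω μ := by
    intro y hy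
    exact ⟨ball y 1, mem_nhdsWithin_of_mem_nhds (ball_mem_nhds y one_pos), hfint _ (h.fin y 1)⟩
  have hfbmo : ∀ (z : X) (R : ℝ), 0 < R → ball z R ⊆ Ω →
          ⨍ y in ball z R, |f y - ⨍ u in ball z R, f u ∂μ| ∂μ ≤ 1 := by
    intro z R hR _
    obtain ⟨a, ha⟩ := tf_osc h hCd hp hUo N z hR
    have := osc_avg (h.pos z hR) (h.fin z R) (hfint _ (h.fin z R)) (c * a) (c * K) (by
      have e : ∀ y, |f y - c * a| = c * |tf μ U N y - a| := fun y => by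
        simp only [hf]; rw [← mul_sub, abs_mul, abs_of_pos hcpos]
      simp only [e]
      rw [integral_const_mul, mul_assoc]
      gcongr)
    refine this.trans (le_of_eq ?_)
    rw [hc]; field_simp
  have htest := hBMOtest x r hr hcomp hsubΩ f hfloc hfbmo
  set b := ⨍ u in ball x r, f u ∂μ with hb
  have hbe : b ≤ 1 / 2 := by
    rw [hb, setAverage_eq, smul_eq_mul, inv_mul_le_iff₀ hBpos]
    simp only [hf]
    rw [integral_const_mul, tf_integral h]
    calc _ ≤ c * (K * μ.real (ball x r)) := by
          gcongr; exact level_sum h hCd hp hUo x hr (Or.inr hnot)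
      _ = _ := by rw [hc]; field_simp
  have hwint : IntegrableOn w (closure (ball x (11 * r))) μ :=
    hwloc.integrableOn_compact_subset hsubΩ hcomp
  have hwB : IntegrableOn w (ball x r) μ :=
    hwint.mono_set ((ball_subset_ball (by linarith)).trans subset_closure)
  have hw2 : 0 ≤ ∫ y in ball x (2 * r), w y ∂μ := integral_nonneg hw
  have hwF : 0 ≤ ∫ y in F, w y ∂μ := integral_nonneg hw
  have hprod : IntegrableOn (fun y => |f y - b| * w y) (ball x r) μ := by
    refine Integrable.bdd_mul (c := c * N + |b|) hwB
      ((hfm.sub_const b).abs).aestronglyMeasurable (Filter.Eventually.of_forall fun y => ?_)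
    rw [Real.norm_eq_abs, abs_abs]
    refine (abs_sub _ _).trans ?_
    gcongr
    rw [abs_of_nonneg (mul_nonneg hcpos.le (tf_nonneg U N y))]
    exact mul_le_mul_of_nonneg_left (tf_le U N y) hcpos.le
  have hlow : (C / η) * ∫ y in F, w y ∂μ ≤ ∫ y in ball x r, |f y - b| * w y ∂μ := by
    rw [← integral_const_mul]
    calc ∫ y in F, C / η * w y ∂μ ≤ ∫ y in F, |f y - b| * w y ∂μ := by
          refine setIntegral_mono_on ((hwB.mono_set hFB).const_mul _) (hprod.mono_set hFB) hFm ?_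
          intro y hy
          refine mul_le_mul_of_nonneg_right ?_ (hw y)
          refine le_trans ?_ (le_abs_self _)
          simp only [hf]
          rw [tf_eq h hUo N (hFU hy)]
          linarith
      _ ≤ _ := setIntegral_mono_set hprod
          (Filter.Eventually.of_forall fun y => mul_nonneg (abs_nonneg _) (hw y))
          (Filter.Eventually.of_forall hFB)
  have := hlow.trans htest
  rw [div_mul_eq_mul_div, div_le_iff₀ hη] at this
  have h2 : C * ∫ y in F, w y ∂μ ≤ C * (η * ∫ y in ball x (2 * r), w y ∂μ) := by linarith
  exact le_of_mul_le_mul_left h2 hC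
end
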